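/- For the Gaussian measure μ_A with trace-class covariance A on a separable Hilbert space H and b in the image of A, the translation formula ∫ f(x) dμ_A(x) = ∫ f(x+b) e^{-(1/2)⟨b, A⁻¹b⟩ - ⟨x, A⁻¹b⟩} dμ_A(x) holds for all bounded measurable f. -/

import Mathlib

open MeasureTheory ProbabilityTheory
open scoped RealInnerProductSpace

lemma aux_symm {H : Type*} [NormedAddCommGroup H] [InnerProductSpace ℝ H]
    [CompleteSpace H] (A : H →L[ℝ] H)
    (e : ℕ → H) (lam : ℕ → ℝ)
    (he : Orthonormal ℝ e)
    (hbasis : ⊤ ≤ Submodule.topologicalClosure (Submodule.span ℝ (Set.range e)))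
    (hdiag : ∀ i, A (e i) = lam i • e i) (x y : H) :
    HasSum (fun i => lam i * (⟪x, e i⟫ * ⟪e i, y⟫)) ⟪x, A y⟫ := by
  let B := HilbertBasis.mk he hbasis
  have hB : ∀ i, B i = e i := fun i => by simp [B]
  have h1 := (B.hasSum_repr y).mapL ((innerSL ℝ x).comp A)
  convert! h1 using 1
  ext i
  simp only [B.repr_apply_apply, hB, map_smul, ContinuousLinearMap.comp_apply, hdiag,
    innerSL_apply_apply, smul_eq_mul, inner_smul_right]
  ring

/-- Cameron–Martin translation formula for the Gaussian measure
μ_A with positive injective diagonal trace-class covariance A: for b = Ac in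
the image of A and every bounded measurable f,
∫ f(x) dμ_A(x) = ∫ f(x+b) e^{-(1/2)⟨b,A⁻¹b⟩ - ⟨x,A⁻¹b⟩} dμ_A(x). -/
theorem stmt8 {H : Type*} [NormedAddCommGroup H] [InnerProductSpace ℝ H]
    [CompleteSpace H] [TopologicalSpace.SeparableSpace H] [MeasurableSpace H]
    [BorelSpace H]
    (A : H →L[ℝ] H) (hinj : Function.Injective A)
    (e : ℕ → H) (lam : ℕ → ℝ)
    (he : Orthonormal ℝ e)
    (hbasis : ⊤ ≤ Submodule.topologicalClosure (Submodule.span ℝ (Set.range e)))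
    (hlam : ∀ i, 0 < lam i) (htrace : Summable lam)
    (hdiag : ∀ i, A (e i) = lam i • e i)
    (μ : Measure H)
    (hμ : ∀ β : H, Measure.map (fun x => ⟪β, x⟫) μ
      = gaussianReal 0 (Real.toNNReal ⟪β, A β⟫))
    (c : H) (b : H) (hb : b = A c)
    (f : H → ℝ) (hf : Measurable f) (hbdd : ∃ C, ∀ x, |f x| ≤ C) :
    ∫ x, f x ∂μ
      = ∫ x, f (x + b) * Real.exp (-(1 / 2) * ⟪b, c⟫ - ⟪x, c⟫) ∂μ := by
  haveI : SecondCountableTopology H := UniformSpace.secondCountable_of_separable H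
  have hsum := aux_symm A e lam he hbasis hdiag
  have hsymm : ∀ x y, ⟪x, A y⟫ = ⟪y, A x⟫ := by
    intro x y
    refine (hsum x y).unique ?_
    convert hsum y x using 2 with i
    rw [real_inner_comm (e i) x, real_inner_comm (e i) y]; ring
  have hpos : ∀ x, 0 ≤ ⟪x, A x⟫ := by
    intro x
    refine (hsum x x).nonneg fun i => ?_
    rw [real_inner_comm (e i) x]
    exact mul_nonneg (hlam i).le (mul_self_nonneg _)
  have hmeas : ∀ β : H, Measurable (fun x : H => ⟪β, x⟫) := fun β => by fun_prop
  haveI : IsProbabilityMeasure μ := by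
    have h := hμ 0
    have : IsProbabilityMeasure (μ.map (fun x : H => ⟪(0:H), x⟫)) := by rw [h]; infer_instance
    exact (Measure.isProbabilityMeasure_map_iff (hmeas 0).aemeasurable).1 this
  have hint : ∀ β : H, Integrable (fun x => Real.exp ⟪β, x⟫) μ := by
    intro β
    have h := integrable_exp_mul_gaussianReal (μ := 0) (v := Real.toNNReal ⟪β, A β⟫) 1
    rw [← hμ β, integrable_map_measure (by fun_prop) (by fun_prop)] at h
    simpa [Function.comp_def] using h
  have hexp : ∀ β : H, ∫ x, Real.exp ⟪β, x⟫ ∂μ = Real.exp (⟪β, A β⟫ / 2) := by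
    intro β
    have h := mgf_gaussianReal (hμ β) 1
    simpa [mgf, hpos β] using h
  set g : H → ℝ := fun x => ⟪-c, x⟫ with hg
  haveI : IsProbabilityMeasure (μ.tilted g) := isProbabilityMeasure_tilted (hint (-c))
  have hadd : Measurable (fun x : H => x + b) := by fun_prop
  set ν : Measure H := (μ.tilted g).map (fun x => x + b) with hν
  haveI : IsProbabilityMeasure ν := Measure.isProbabilityMeasure_map hadd.aemeasurable
  have hmgf : ∀ t : H, mgf (fun x => ⟪t, x⟫) μ = mgf (fun x => ⟪t, x⟫) ν := by
    intro t
    ext s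
    have h1 : ∀ x : H, s * ⟪t, x + b⟫ = s * ⟪t, b⟫ + ⟪s • t, x⟫ := by
      intro x; rw [inner_add_right, inner_smul_left]; simp; ring
    have h2 : ∀ x : H, (g + fun x => ⟪s • t, x⟫) x = ⟪s • t - c, x⟫ := by
      intro x; simp [hg, inner_sub_left, inner_neg_left]; ring
    have h3 : ∀ x : H, s * ⟪t, x⟫ = ⟪s • t, x⟫ := by
      intro x; rw [inner_smul_left]; simp
    have hR : mgf (fun x => ⟪t, x⟫) ν s = ∫ x, Real.exp (s * ⟪t, x + b⟫) ∂(μ.tilted g) := by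
      rw [mgf, hν, integral_map hadd.aemeasurable (by fun_prop)]
    rw [hR]
    simp_rw [h1, Real.exp_add]
    rw [integral_const_mul, integral_exp_tilted]
    simp_rw [h2, hg]
    rw [mgf]
    simp_rw [h3]
    rw [hexp, hexp, hexp, hb, ← Real.exp_sub, ← Real.exp_add]
    congr 1
    simp only [map_sub, map_neg, map_smul, inner_sub_left, inner_sub_right, inner_neg_left,
      inner_neg_right, real_inner_smul_left, real_inner_smul_right, hsymm c t]
    ring
  have hset : ∀ t : H, integrableExpSet (fun x => ⟪t, x⟫) μ = Set.univ := by
    intro t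
    ext s
    simp only [integrableExpSet, Set.mem_setOf_eq, Set.mem_univ, iff_true]
    simpa [real_inner_smul_left] using hint (s • t)
  have hμν : μ = ν := by
    apply Measure.ext_of_charFun
    ext t
    have hc := eqOn_complexMGF_of_mgf (hmgf t)
    rw [hset] at hc
    have := hc (x := Complex.I) (by simp)
    simpa [complexMGF, charFun_apply, real_inner_comm, mul_comm] using this
  calc ∫ x, f x ∂μ = ∫ x, f x ∂ν := by rw [← hμν]
    _ = ∫ x, f (x + b) ∂(μ.tilted g) := by
      rw [hν, integral_map hadd.aemeasurable hf.aestronglyMeasurable]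
    _ = _ := by
      rw [integral_tilted, hg, hexp]
      congr 1
      ext x
      rw [smul_eq_mul, ← Real.exp_sub, mul_comm, hb]
      congr 2
      simp only [map_neg, inner_neg_left, inner_neg_right, real_inner_comm c]
      rw [real_inner_comm]
      ring
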